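/- arXiv:2206.12919 — 2 statements merged into one kernel-verified Lean document; each statement's English description precedes it below -/
import Mathlib

section
/- Fix a ∈ ℝ and write P(A ≤ a | ·) := E[1_{A ≤ a} | ·]. Suppose A and W₀ are conditionally independent given (Z, U), and τ : 𝓩 × 𝓦₁ → ℝ is measurable with τ(Z, W₁) integrable, satisfying the structural control-bridge condition E[τ(Z, W₁) | Z, U, W₀] = P(A ≤ a | Z, U) almost surely. Then the observable moment restriction holds: E[τ(Z, W₁) | Z, W₀] = P(A ≤ a | Z, W₀) almost surely. -/
open MeasureTheory ProbabilityTheory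

/-!
Conditional independence of `A` and `W₀` given `(Z, U)` means that adding `W₀` to the conditioning
does not change conditional expectations of functions of `A`:
`E[f(A) | Z, U, W₀] = E[f(A) | Z, U]`. The bridge condition therefore says that `τ(Z, W₁)` and
`1_{A ≤ a}` have the same conditional expectation given `(Z, U, W₀)`, and the tower property passes
this down to `(Z, W₀)`.
-/

section PiSystem

variable {Ω : Type*} {m₁ m₂ : MeasurableSpace Ω}

lemma isPiSystem_image2_inter :
    IsPiSystem (Set.image2 (· ∩ ·) {s | MeasurableSet[m₁] s} {t | MeasurableSet[m₂] t}) := by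
  rintro _ ⟨s, hs, t, ht, rfl⟩ _ ⟨s', hs', t', ht', rfl⟩ -
  exact ⟨s ∩ s', hs.inter hs', t ∩ t', ht.inter ht', Set.inter_inter_inter_comm s s' t t'⟩

lemma generateFrom_image2_inter :
    MeasurableSpace.generateFrom
      (Set.image2 (· ∩ ·) {s | MeasurableSet[m₁] s} {t | MeasurableSet[m₂] t}) = m₁ ⊔ m₂ := by
  refine le_antisymm (MeasurableSpace.generateFrom_le ?_) (sup_le (fun s hs ↦ ?_) fun t ht ↦ ?_)
  · rintro _ ⟨s, hs, t, ht, rfl⟩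
    exact MeasurableSet.inter (le_sup_left (b := m₂) s hs) (le_sup_right (a := m₁) t ht)
  · exact MeasurableSpace.measurableSet_generateFrom
      ⟨s, hs, Set.univ, MeasurableSet.univ, Set.inter_univ s⟩
  · exact MeasurableSpace.measurableSet_generateFrom
      ⟨Set.univ, MeasurableSet.univ, t, ht, Set.univ_inter t⟩

end PiSystem

section CondExp

variable {Ω E : Type*} {m m₁ m₂ mΩ : MeasurableSpace Ω} {μ : Measure Ω}
  [NormedAddCommGroup E] [NormedSpace ℝ E] {f g : Ω → E}

lemma setIntegral_eq_of_isPiSystem {C : Set (Set Ω)} (hm : m ≤ mΩ)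
    (hmC : m = MeasurableSpace.generateFrom C) (hC : IsPiSystem C)
    (hf : Integrable f μ) (hg : Integrable g μ) (huniv : ∫ ω, f ω ∂μ = ∫ ω, g ω ∂μ)
    (heq : ∀ s ∈ C, ∫ ω in s, f ω ∂μ = ∫ ω in s, g ω ∂μ) {s : Set Ω} (hs : MeasurableSet[m] s) :
    ∫ ω in s, f ω ∂μ = ∫ ω in s, g ω ∂μ := by
  induction s, hs using MeasurableSpace.induction_on_inter hmC hC with
  | empty => simp
  | basic s hs => exact heq s hs
  | compl s hs ih => rw [setIntegral_compl (hm s hs) hf, setIntegral_compl (hm s hs) hg, huniv, ih]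
  | iUnion s hdisj hs ih =>
    rw [integral_iUnion (fun i ↦ hm _ (hs i)) hdisj hf.integrableOn,
      integral_iUnion (fun i ↦ hm _ (hs i)) hdisj hg.integrableOn]
    exact tsum_congr ih

variable [CompleteSpace E] [IsFiniteMeasure μ]

lemma ae_eq_condExp_sup_of_forall_setIntegral_inter_eq (hm₁ : m₁ ≤ mΩ) (hm₂ : m₂ ≤ mΩ)
    (hf : Integrable f μ) (hg : Integrable g μ) (hgm : AEStronglyMeasurable[m₁ ⊔ m₂] g μ)
    (heq : ∀ s t, MeasurableSet[m₁] s → MeasurableSet[m₂] t →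
      ∫ ω in s ∩ t, g ω ∂μ = ∫ ω in s ∩ t, f ω ∂μ) :
    g =ᵐ[μ] μ[f | m₁ ⊔ m₂] := by
  have huniv : ∫ ω, g ω ∂μ = ∫ ω, f ω ∂μ := by
    simpa using heq Set.univ Set.univ MeasurableSet.univ MeasurableSet.univ
  refine ae_eq_condExp_of_forall_setIntegral_eq (sup_le hm₁ hm₂) hf
    (fun _ _ _ ↦ hg.integrableOn) (fun u hu _ ↦ ?_) hgm
  refine setIntegral_eq_of_isPiSystem (sup_le hm₁ hm₂) generateFrom_image2_inter.symm
    isPiSystem_image2_inter hg hf huniv ?_ hu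
  rintro _ ⟨s, hs, t, ht, rfl⟩
  exact heq s t hs ht

lemma condExp_indicator_ae_eq_condExp_one_smul {t : Set Ω} (ht : MeasurableSet t)
    (hf : Integrable f μ) (hfm : AEStronglyMeasurable[m] f μ) :
    μ[t.indicator f | m] =ᵐ[μ] μ⟦t | m⟧ • f := by
  have hsmul : t.indicator f = (t.indicator fun _ ↦ (1 : ℝ)) • f := by
    ext ω
    by_cases hω : ω ∈ t <;> simp [hω]
  rw [hsmul]
  exact condExp_smul_of_aestronglyMeasurable_right ((integrable_const 1).indicator ht)
    (hsmul ▸ hf.indicator ht) hfm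

lemma setIntegral_inter_eq_setIntegral_condExp_smul (hm : m ≤ mΩ) {s t : Set Ω}
    (hs : MeasurableSet[m] s) (ht : MeasurableSet t) (hf : Integrable f μ)
    (hfm : AEStronglyMeasurable[m] f μ) :
    ∫ ω in s ∩ t, f ω ∂μ = ∫ ω in s, (μ⟦t | m⟧ • f) ω ∂μ := by
  rw [← setIntegral_indicator ht, ← setIntegral_condExp hm (hf.indicator ht) hs]
  exact integral_congr_ae
    (ae_restrict_of_ae (condExp_indicator_ae_eq_condExp_one_smul ht hf hfm))

end CondExp

section CondIndep

variable {Ω E : Type*} {m m' m₁ m₂ mΩ : MeasurableSpace Ω} [StandardBorelSpace Ω]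
  {μ : Measure Ω} [IsFiniteMeasure μ] [NormedAddCommGroup E] [NormedSpace ℝ E] [CompleteSpace E]
  {f g : Ω → E}

lemma condExp_indicator_one_sup_eq_of_condIndep (hm' : m' ≤ mΩ) (hm₁ : m₁ ≤ mΩ) (hm₂ : m₂ ≤ mΩ)
    (hindep : CondIndep m' m₁ m₂ hm' μ) {s : Set Ω} (hs : MeasurableSet[m₁] s) :
    μ⟦s | m' ⊔ m₂⟧ =ᵐ[μ] μ⟦s | m'⟧ := by
  refine (ae_eq_condExp_sup_of_forall_setIntegral_inter_eq hm' hm₂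
    ((integrable_const 1).indicator (hm₁ s hs)) integrable_condExp
    (stronglyMeasurable_condExp.aestronglyMeasurable.mono le_sup_left)
    fun b t hb ht ↦ ?_).symm
  have hfactor : μ⟦s ∩ t | m'⟧ =ᵐ[μ] μ⟦t | m'⟧ • μ⟦s | m'⟧ := by
    rw [smul_eq_mul, mul_comm]
    exact (condIndep_iff m' m₁ m₂ hm' hm₁ hm₂ μ).1 hindep s t hs ht
  calc ∫ ω in b ∩ t, (μ⟦s | m'⟧) ω ∂μ
      = ∫ ω in b, (μ⟦t | m'⟧ • μ⟦s | m'⟧) ω ∂μ :=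
        setIntegral_inter_eq_setIntegral_condExp_smul hm' hb (hm₂ t ht) integrable_condExp
          stronglyMeasurable_condExp.aestronglyMeasurable
    _ = ∫ ω in b, (μ⟦s ∩ t | m'⟧) ω ∂μ :=
        integral_congr_ae (ae_restrict_of_ae hfactor.symm)
    _ = ∫ ω in b, (s ∩ t).indicator (fun _ ↦ (1 : ℝ)) ω ∂μ :=
        setIntegral_condExp hm'
          ((integrable_const 1).indicator ((hm₁ s hs).inter (hm₂ t ht))) hb
    _ = ∫ ω in b ∩ t, s.indicator (fun _ ↦ (1 : ℝ)) ω ∂μ := by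
        rw [← setIntegral_indicator (hm₂ t ht), Set.indicator_indicator, Set.inter_comm]

/- Testing against `b ∩ t` with `t` in `m₂`, the symmetric statement for the event `t` replaces
`μ⟦t | m' ⊔ m₁⟧` by `μ⟦t | m'⟧`; pulling out then suffices, with no approximation of `f`. -/
lemma condExp_sup_eq_of_condIndep (hm' : m' ≤ mΩ) (hm₁ : m₁ ≤ mΩ) (hm₂ : m₂ ≤ mΩ)
    (hindep : CondIndep m' m₁ m₂ hm' μ) (hf : Integrable f μ)
    (hfm : AEStronglyMeasurable[m₁] f μ) :
    μ[f | m' ⊔ m₂] =ᵐ[μ] μ[f | m'] := by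
  refine (ae_eq_condExp_sup_of_forall_setIntegral_inter_eq hm' hm₂ hf integrable_condExp
    (stronglyMeasurable_condExp.aestronglyMeasurable.mono le_sup_left)
    fun b t hb ht ↦ ?_).symm
  have hfm_sup : AEStronglyMeasurable[m' ⊔ m₁] f μ := hfm.mono le_sup_right
  have hdrop : μ⟦t | m' ⊔ m₁⟧ • f =ᵐ[μ] μ⟦t | m'⟧ • f :=
    (condExp_indicator_one_sup_eq_of_condIndep hm' hm₂ hm₁ hindep.symm ht).smul .rfl
  have hint : Integrable (μ⟦t | m'⟧ • f) μ :=
    integrable_condExp.congr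
      ((condExp_indicator_ae_eq_condExp_one_smul (hm₂ t ht) hf hfm_sup).trans hdrop)
  calc ∫ ω in b ∩ t, (μ[f | m']) ω ∂μ
      = ∫ ω in b, (μ⟦t | m'⟧ • μ[f | m']) ω ∂μ :=
        setIntegral_inter_eq_setIntegral_condExp_smul hm' hb (hm₂ t ht) integrable_condExp
          stronglyMeasurable_condExp.aestronglyMeasurable
    _ = ∫ ω in b, (μ[μ⟦t | m'⟧ • f | m']) ω ∂μ :=
        integral_congr_ae (ae_restrict_of_ae (condExp_smul_of_aestronglyMeasurable_left
          stronglyMeasurable_condExp.aestronglyMeasurable hint hf).symm)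
    _ = ∫ ω in b, (μ⟦t | m'⟧ • f) ω ∂μ := setIntegral_condExp hm' hint hb
    _ = ∫ ω in b, (μ⟦t | m' ⊔ m₁⟧ • f) ω ∂μ :=
        integral_congr_ae (ae_restrict_of_ae hdrop.symm)
    _ = ∫ ω in b ∩ t, f ω ∂μ :=
        (setIntegral_inter_eq_setIntegral_condExp_smul (sup_le hm' hm₁)
          (le_sup_left (b := m₁) b hb) (hm₂ t ht) hf hfm_sup).symm

lemma condExp_eq_of_condIndep_of_condExp_sup_eq (hm' : m' ≤ mΩ) (hm₁ : m₁ ≤ mΩ) (hm₂ : m₂ ≤ mΩ)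
    (hm : m ≤ m' ⊔ m₂) (hindep : CondIndep m' m₁ m₂ hm' μ) (hf : Integrable f μ)
    (hfm : AEStronglyMeasurable[m₁] f μ) (hgf : μ[g | m' ⊔ m₂] =ᵐ[μ] μ[f | m']) :
    μ[g | m] =ᵐ[μ] μ[f | m] :=
  have hsup : m' ⊔ m₂ ≤ mΩ := sup_le hm' hm₂
  calc μ[g | m]
      =ᵐ[μ] μ[μ[g | m' ⊔ m₂] | m] := (condExp_condExp_of_le hm hsup).symm
    _ =ᵐ[μ] μ[μ[f | m' ⊔ m₂] | m] := condExp_congr_ae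
        (hgf.trans (condExp_sup_eq_of_condIndep hm' hm₁ hm₂ hindep hf hfm).symm)
    _ =ᵐ[μ] μ[f | m] := condExp_condExp_of_le hm hsup

end CondIndep

theorem icc_lemma7_control_bridge_obs_general
    {Ω 𝓩 𝓤 𝓦 𝓐 E : Type*} [MeasurableSpace Ω] [StandardBorelSpace Ω]
    [MeasurableSpace 𝓩] [MeasurableSpace 𝓤] [MeasurableSpace 𝓦] [MeasurableSpace 𝓐]
    [NormedAddCommGroup E] [NormedSpace ℝ E] [CompleteSpace E]
    {P : Measure Ω} [IsFiniteMeasure P]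
    {Z : Ω → 𝓩} {U : Ω → 𝓤} {W : Ω → 𝓦} {A : Ω → 𝓐} {Y : Ω → E} {f : 𝓐 → E}
    (hZ : Measurable Z) (hU : Measurable U) (hW : Measurable W) (hA : Measurable A)
    (hindep : CondIndepFun (MeasurableSpace.comap (fun ω ↦ (Z ω, U ω)) inferInstance)
      (hZ.prodMk hU).comap_le A W P)
    (_hY : Integrable Y P) (hf : StronglyMeasurable f) (hfA : Integrable (fun ω ↦ f (A ω)) P)
    (hbridge : P[Y | MeasurableSpace.comap (fun ω ↦ (Z ω, U ω, W ω)) inferInstance]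
      =ᵐ[P] P[fun ω ↦ f (A ω) | MeasurableSpace.comap (fun ω ↦ (Z ω, U ω)) inferInstance]) :
    P[Y | MeasurableSpace.comap (fun ω ↦ (Z ω, W ω)) inferInstance]
      =ᵐ[P] P[fun ω ↦ f (A ω) | MeasurableSpace.comap (fun ω ↦ (Z ω, W ω)) inferInstance] := by
  have hZUW : MeasurableSpace.comap (fun ω ↦ (Z ω, U ω, W ω)) inferInstance =
      MeasurableSpace.comap (fun ω ↦ (Z ω, U ω)) inferInstance ⊔
        MeasurableSpace.comap W inferInstance := by
    simp only [inferInstance, Prod.instMeasurableSpace, MeasurableSpace.comap_prodMk, sup_assoc]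
  have hZW : MeasurableSpace.comap (fun ω ↦ (Z ω, W ω)) inferInstance ≤
      MeasurableSpace.comap (fun ω ↦ (Z ω, U ω)) inferInstance ⊔
        MeasurableSpace.comap W inferInstance := by
    simp only [inferInstance, Prod.instMeasurableSpace, MeasurableSpace.comap_prodMk]
    exact sup_le_sup_right le_sup_left _
  rw [hZUW] at hbridge
  exact condExp_eq_of_condIndep_of_condExp_sup_eq (hZ.prodMk hU).comap_le hA.comap_le hW.comap_le
    hZW ((condIndepFun_iff_condIndep _ _ A W P).1 hindep) hfA
    (hf.comp_measurable (comap_measurable A)).aestronglyMeasurable hbridge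

/-- **Lemma 7, equation (1) (ICC paper).** Fix `a ∈ ℝ`. If `A ⫫ W₀ | (Z, U)`
and `τ` satisfies the structural control-bridge condition
`E[τ(Z, W₁) | Z, U, W₀] = P(A ≤ a | Z, U)` a.s., then the observable moment
restriction `E[τ(Z, W₁) | Z, W₀] = P(A ≤ a | Z, W₀)` holds a.s. -/
theorem icc_lemma7_control_bridge_obs
    {Ω 𝓩 𝓤 𝓦₀ 𝓦₁ : Type*}
    [MeasurableSpace Ω] [StandardBorelSpace Ω] [Nonempty Ω]
    [MeasurableSpace 𝓩] [MeasurableSpace 𝓤] [MeasurableSpace 𝓦₀] [MeasurableSpace 𝓦₁]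
    (P : Measure Ω) [IsProbabilityMeasure P]
    (Z : Ω → 𝓩) (U : Ω → 𝓤) (W₀ : Ω → 𝓦₀) (W₁ : Ω → 𝓦₁) (A : Ω → ℝ)
    (hZ : Measurable Z) (hU : Measurable U) (hW₀ : Measurable W₀)
    (hW₁ : Measurable W₁) (hA : Measurable A)
    (a : ℝ)
    -- A ⫫ W₀ | (Z, U)
    (hindep : CondIndepFun
      (MeasurableSpace.comap (fun ω => (Z ω, U ω)) inferInstance)
      (Measurable.comap_le (by fun_prop)) A W₀ P)
    (τ : 𝓩 × 𝓦₁ → ℝ) (hτ : Measurable τ)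
    (hτInt : Integrable (fun ω => τ (Z ω, W₁ ω)) P)
    -- structural control-bridge condition:
    -- E[τ(Z, W₁) | Z, U, W₀] = P(A ≤ a | Z, U) a.s.
    (hbridge : P[(fun ω => τ (Z ω, W₁ ω)) |
        MeasurableSpace.comap (fun ω => (Z ω, U ω, W₀ ω)) inferInstance]
      =ᵐ[P] P[(Set.indicator {ω | A ω ≤ a} fun _ => (1 : ℝ)) |
        MeasurableSpace.comap (fun ω => (Z ω, U ω)) inferInstance]) :
    -- observable moment restriction: E[τ(Z, W₁) | Z, W₀] = P(A ≤ a | Z, W₀) a.s.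
    P[(fun ω => τ (Z ω, W₁ ω)) |
        MeasurableSpace.comap (fun ω => (Z ω, W₀ ω)) inferInstance]
      =ᵐ[P] P[(Set.indicator {ω | A ω ≤ a} fun _ => (1 : ℝ)) |
        MeasurableSpace.comap (fun ω => (Z ω, W₀ ω)) inferInstance] := by
  exact icc_lemma7_control_bridge_obs_general (f := (Set.Iic a).indicator fun _ => 1) hZ hU hW₀ hA
    hindep hτInt (stronglyMeasurable_const.indicator measurableSet_Iic)
    ((integrable_const 1).indicator (hA measurableSet_Iic)) hbridge
end

section
/- Suppose: (i) W is conditionally independent of the pair (A, Z) given U; (ii) ε and A are conditionally independent given (Ṽ, U); (iii) the common-support condition holds: there is a nonnegative measurable conditional density f of A given (Ṽ, U) with respect to μ_A (for every bounded measurable φ, E[φ(A, Ṽ, U)] = E[∫_𝓐 φ(a, Ṽ, U) f(a, Ṽ, U) dμ_A(a)]) with f(a, Ṽ(ω), U(ω)) > 0 for μ_A ⊗ ℙ-almost every (a, ω) with π(a) ≠ 0; (iv) h₀ : 𝓐 × ℝ × 𝓦 → ℝ is measurable and satisfies the structural outcome-bridge condition E[Y − h₀(A, Ṽ, W) | A,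 Ṽ, U] = 0 almost surely; (v) all displayed integrands are integrable. Then the regression identity holds: E[∫_𝓐 h₀(a, Ṽ, W) π(a) dμ_A(a)] = J := E[∫_𝓐 g(a, U, ε) π(a) dμ_A(a)]. -/
open MeasureTheory ProbabilityTheory

/-!
Write `S = (Ṽ, U)`. If `X ⫫ A | S`, then `f` is also a conditional density of `A` given `(S, X)`, so
the inverse density weight `π(A) / f(A, S)` gives
`E[∫ G(a, S, X) π(a) dμ_A(a)] = E[π(A) / f(A, S) * G(A, S, X)]`. Weak union turns `W ⫫ (A, Z) | U`
into `W ⫫ A | S`, so this applies to `(X, G) = (W, h₀)` as well as to `(X, G) = (ε, g)`. The two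
right-hand sides differ by the expectation of the bridge residual times a weight that is a function
of `(A, S)`, which is zero because the residual has conditional mean zero given `(A, S)`.
-/

section Disintegration

variable {𝓢 𝓐 : Type*} [MeasurableSpace 𝓢] [MeasurableSpace 𝓐]
  {ρ : Measure (𝓢 × 𝓐)} [IsFiniteMeasure ρ] {κ : Kernel 𝓢 𝓐}

-- `Measure.real` of an infinite mass is `0`, so if `κ s` were infinite for `s` in a set `N` of
-- positive measure, then the hypothesis at `B = N × 𝓐` would give `ρ (N × 𝓐) = 0`.
lemma ae_isFiniteMeasure_of_forall_measureReal_eq_integral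
    (h : ∀ B, MeasurableSet B → ρ.real B = ∫ s, (κ s).real (Prod.mk s ⁻¹' B) ∂ρ.fst) :
    ∀ᵐ s ∂ρ.fst, IsFiniteMeasure (κ s) := by
  set N : Set 𝓢 := {s | κ s Set.univ = ⊤}
  have hN : MeasurableSet N := κ.measurable_coe .univ (measurableSet_singleton ⊤)
  have section_real_eq_zero (s : 𝓢) : (κ s).real (Prod.mk s ⁻¹' (Prod.fst ⁻¹' N)) = 0 := by
    by_cases hs : κ s Set.univ = ⊤ <;> simp [N, Set.preimage, hs, measureReal_def]
  have hρN : ρ.real (Prod.fst ⁻¹' N) = 0 := by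
    simp only [h _ (measurable_fst hN), section_real_eq_zero, integral_zero]
  have hfstN : ρ.fst N = 0 := by
    rwa [Measure.fst_apply hN, ← measureReal_eq_zero_iff]
  filter_upwards [measure_eq_zero_iff_ae_notMem.1 hfstN] with s hs
  exact ⟨lt_top_iff_ne_top.2 hs⟩

lemma integrable_measureReal_univ_of_forall_measureReal_eq_integral
    (h : ∀ B, MeasurableSet B → ρ.real B = ∫ s, (κ s).real (Prod.mk s ⁻¹' B) ∂ρ.fst) :
    Integrable (fun s => (κ s).real Set.univ) ρ.fst := by
  by_contra hint
  have hρ : ρ.real Set.univ = 0 := by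
    rw [h _ .univ]
    exact integral_undef hint
  have : ρ = 0 := by rwa [measureReal_eq_zero_iff, Measure.measure_univ_eq_zero] at hρ
  exact hint (by simp [this])

theorem eq_compProd_of_forall_measureReal_eq_integral [IsSFiniteKernel κ]
    (h : ∀ B, MeasurableSet B → ρ.real B = ∫ s, (κ s).real (Prod.mk s ⁻¹' B) ∂ρ.fst) :
    ρ = ρ.fst ⊗ₘ κ := by
  have hfinite := ae_isFiniteMeasure_of_forall_measureReal_eq_integral h
  ext B hB
  have hint : Integrable (fun s => (κ s).real (Prod.mk s ⁻¹' B)) ρ.fst := by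
    refine (integrable_measureReal_univ_of_forall_measureReal_eq_integral h).mono'
      (Kernel.measurable_kernel_prodMk_left hB).ennreal_toReal.aestronglyMeasurable ?_
    filter_upwards [hfinite] with s _
    rw [Real.norm_of_nonneg measureReal_nonneg]
    exact measureReal_mono (Set.subset_univ _)
  calc ρ B = ENNReal.ofReal (∫ s, (κ s).real (Prod.mk s ⁻¹' B) ∂ρ.fst) := by
        rw [← h B hB, ofReal_measureReal]
    _ = ∫⁻ s, ENNReal.ofReal ((κ s).real (Prod.mk s ⁻¹' B)) ∂ρ.fst :=
        ofReal_integral_eq_lintegral_ofReal hint (.of_forall fun _ => measureReal_nonneg)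
    _ = ∫⁻ s, κ s (Prod.mk s ⁻¹' B) ∂ρ.fst := by
        refine lintegral_congr_ae ?_
        filter_upwards [hfinite] with s _ using ofReal_measureReal
    _ = (ρ.fst ⊗ₘ κ) B := (Measure.compProd_apply hB).symm

end Disintegration

section CondIndep

variable {Ω 𝓑 𝓢 𝓧 : Type*} [MeasurableSpace Ω] [StandardBorelSpace Ω] [Nonempty Ω]
  [MeasurableSpace 𝓑] [StandardBorelSpace 𝓑] [MeasurableSpace 𝓢]
  [MeasurableSpace 𝓧] [StandardBorelSpace 𝓧]
  {P : Measure Ω} [IsFiniteMeasure P] {B : Ω → 𝓑} {S : Ω → 𝓢} {X : Ω → 𝓧}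

theorem hasCondDistrib_prodMkRight_of_condIndepFun {κ : Kernel 𝓢 𝓧} [IsSFiniteKernel κ]
    (hX : Measurable X) (hB : Measurable B) (hS : Measurable S)
    (hindep : B ⟂ᵢ[S, hS; P] X) (hκ : HasCondDistrib X S κ P) :
    HasCondDistrib X (fun ω => (S ω, B ω)) (κ.prodMkRight 𝓑) P := by
  have : Nonempty 𝓧 := .map X ‹_›
  have : Nonempty 𝓑 := .map B ‹_›
  have hcond := (condIndepFun_iff_condDistrib_prod_ae_eq_prodMkRight hX hB hS).1 hindep
  refine ⟨by fun_prop, Measure.ext_prod fun {s t} hs ht => ?_⟩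
  have hκt : ∀ᵐ x ∂P.map S, κ x t = condDistrib X S P x t := by
    have hlaw := hκ.map_eq
    rw [← Measure.fst_map_prodMk (X := S) hX] at hlaw ⊢
    rw [condDistrib]
    exact eq_condKernel_of_measure_eq_compProd' κ hlaw ht
  rw [← Measure.fst_map_prodMk (X := S) hB] at hκt
  rw [← compProd_map_condDistrib hX.aemeasurable, Measure.compProd_congr hcond,
    Measure.compProd_apply_prod hs ht, Measure.compProd_apply_prod hs ht]
  refine lintegral_congr_ae (ae_restrict_of_ae ?_)
  filter_upwards [ae_of_ae_map measurable_fst.aemeasurable hκt] with x hx using hx.symm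

lemma condIndepFun_of_hasCondDistrib_prodMkRight {κ : Kernel 𝓢 𝓧} [IsFiniteKernel κ]
    (hX : Measurable X) (hB : Measurable B) (hS : Measurable S)
    (hκ : HasCondDistrib X (fun ω => (S ω, B ω)) (κ.prodMkRight 𝓑) P) :
    B ⟂ᵢ[S, hS; P] X := by
  have : Nonempty 𝓧 := .map X ‹_›
  have : Nonempty 𝓑 := .map B ‹_›
  have hκS : HasCondDistrib X S κ P := hκ.comp_right
  have hcond := condDistrib_ae_eq_of_measure_eq_compProd S hX.aemeasurable hκS.map_eq
  rw [← Measure.fst_map_prodMk (X := S) hB] at hcond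
  refine (condIndepFun_iff_condDistrib_prod_ae_eq_prodMkRight hX hB hS).2 ?_
  filter_upwards [condDistrib_ae_eq_of_measure_eq_compProd _ hX.aemeasurable hκ.map_eq,
    ae_of_ae_map measurable_fst.aemeasurable hcond] with x hx hx₁
  rw [hx, Kernel.prodMkRight_apply, Kernel.prodMkRight_apply, hx₁]

theorem condIndepFun_weak_union {𝓒 𝓓 : Type*} [MeasurableSpace 𝓒] [StandardBorelSpace 𝓒]
    [MeasurableSpace 𝓓] {c : 𝓑 → 𝓒} {d : 𝓑 → 𝓓} (hc : Measurable c) (hd : Measurable d)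
    (hX : Measurable X) (hB : Measurable B) (hS : Measurable S)
    (hindep : X ⟂ᵢ[S, hS; P] B) :
    X ⟂ᵢ[fun ω => (d (B ω), S ω), (hd.comp hB).prodMk hS; P] (c ∘ B) := by
  have : Nonempty 𝓧 := .map X ‹_›
  have hcondDistrib : HasCondDistrib X S (condDistrib X S P) P :=
    ⟨by fun_prop, (compProd_map_condDistrib hX.aemeasurable).symm⟩
  have hcondB := hasCondDistrib_prodMkRight_of_condIndepFun hX hB hS hindep.symm hcondDistrib
  have hq : Measurable fun p : 𝓢 × 𝓑 => ((d p.2, p.1), c p.2) := by fun_prop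
  refine (condIndepFun_of_hasCondDistrib_prodMkRight (κ := (condDistrib X S P).prodMkLeft 𝓓)
    hX (hc.comp hB) ((hd.comp hB).prodMk hS) ?_).symm
  exact HasCondDistrib.comp_right (κ := ((condDistrib X S P).prodMkLeft 𝓓).prodMkRight 𝓒)
    (hf := hq) hcondB

end CondIndep

section DensityKernel

variable {𝓢 𝓐 : Type*} [MeasurableSpace 𝓢] [MeasurableSpace 𝓐]

/-- The kernel `s ↦ f(·, s) dμ`. That `f` is a conditional density of `A` given `S` with respect to
`μ` is expressed as `HasCondDistrib A S (densityKernel μ f) P`. Negative values of `f` count as `0`,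
and the kernel is `0` if `f` is not measurable. -/
noncomputable def densityKernel (μ : Measure 𝓐) [SFinite μ] (f : 𝓐 × 𝓢 → ℝ) : Kernel 𝓢 𝓐 :=
  (Kernel.const 𝓢 μ).withDensity fun s a => ENNReal.ofReal (f (a, s))

variable {μ : Measure 𝓐} [SFinite μ] {f : 𝓐 × 𝓢 → ℝ}

instance : IsSFiniteKernel (densityKernel μ f) :=
  inferInstanceAs (IsSFiniteKernel ((Kernel.const 𝓢 μ).withDensity fun s a => (f (a, s)).toNNReal))

lemma densityKernel_apply (hf : Measurable f) (s : 𝓢) :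
    densityKernel μ f s = μ.withDensity fun a => ENNReal.ofReal (f (a, s)) :=
  Kernel.withDensity_apply _ (by fun_prop) s

lemma prodMkRight_densityKernel {𝓧 : Type*} [MeasurableSpace 𝓧] (hf : Measurable f) :
    (densityKernel μ f).prodMkRight 𝓧 = densityKernel μ fun p => f (p.1, p.2.1) := by
  ext1 p
  rw [Kernel.prodMkRight_apply, densityKernel_apply hf, densityKernel_apply (by fun_prop)]

lemma measureReal_densityKernel (hf : Measurable f) (hf_nonneg : ∀ x, 0 ≤ f x) (s : 𝓢)
    {B : Set 𝓐} (hB : MeasurableSet B) :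
    (densityKernel μ f s).real B = ∫ a, B.indicator 1 a * f (a, s) ∂μ := by
  rw [← integral_indicator_one hB, densityKernel_apply hf,
    integral_withDensity_eq_integral_toReal_smul (by fun_prop) (by simp)]
  simp only [ENNReal.toReal_ofReal (hf_nonneg _), smul_eq_mul, mul_comm]

variable {Ω : Type*} [MeasurableSpace Ω] {P : Measure Ω} [IsFiniteMeasure P]
  {A : Ω → 𝓐} {S : Ω → 𝓢}

theorem hasCondDistrib_densityKernel_of_forall_integral_eq (hA : Measurable A) (hS : Measurable S)
    (hf : Measurable f) (hf_nonneg : ∀ x, 0 ≤ f x)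
    (hf_density : ∀ φ : 𝓐 × 𝓢 → ℝ, Measurable φ → (∃ C, ∀ x, |φ x| ≤ C) →
      ∫ ω, φ (A ω, S ω) ∂P = ∫ ω, ∫ a, φ (a, S ω) * f (a, S ω) ∂μ ∂P) :
    HasCondDistrib A S (densityKernel μ f) P := by
  have hSA : Measurable fun ω => (S ω, A ω) := by fun_prop
  refine ⟨hSA.aemeasurable, ?_⟩
  rw [← Measure.fst_map_prodMk (X := S) hA]
  refine eq_compProd_of_forall_measureReal_eq_integral fun B hB => ?_
  have hind : Measurable (B.indicator (1 : 𝓢 × 𝓐 → ℝ)) := measurable_one.indicator hB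
  have hbounded (x : 𝓐 × 𝓢) : |B.indicator (1 : 𝓢 × 𝓐 → ℝ) x.swap| ≤ 1 := by
    by_cases hx : x.swap ∈ B <;> simp [hx]
  have hsection : Measurable fun s => (densityKernel μ f s).real (Prod.mk s ⁻¹' B) :=
    (Kernel.measurable_kernel_prodMk_left hB).ennreal_toReal
  calc (P.map fun ω => (S ω, A ω)).real B = ∫ ω, B.indicator 1 (S ω, A ω) ∂P := by
        rw [← integral_indicator_one hB, integral_map hSA.aemeasurable hind.aestronglyMeasurable]
    _ = ∫ ω, ∫ a, B.indicator 1 (S ω, a) * f (a, S ω) ∂μ ∂P :=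
        hf_density (fun x => B.indicator 1 x.swap) (hind.comp measurable_swap) ⟨1, hbounded⟩
    _ = ∫ ω, (densityKernel μ f (S ω)).real (Prod.mk (S ω) ⁻¹' B) ∂P := by
        simp only [measureReal_densityKernel hf hf_nonneg _ (measurable_prodMk_left hB)]
        rfl
    _ = ∫ s, (densityKernel μ f s).real (Prod.mk s ⁻¹' B) ∂(P.map fun ω => (S ω, A ω)).fst := by
        rw [Measure.fst_map_prodMk hA, integral_map hS.aemeasurable hsection.aestronglyMeasurable]

theorem hasCondDistrib_densityKernel_prodMk_of_condIndepFun {𝓧 : Type*} [MeasurableSpace 𝓧]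
    [StandardBorelSpace 𝓧] [StandardBorelSpace 𝓐] [StandardBorelSpace Ω] [Nonempty Ω] {X : Ω → 𝓧}
    (hA : Measurable A) (hX : Measurable X) (hS : Measurable S) (hf : Measurable f)
    (hindep : X ⟂ᵢ[S, hS; P] A) (hd : HasCondDistrib A S (densityKernel μ f) P) :
    HasCondDistrib A (fun ω => (S ω, X ω)) (densityKernel μ fun p => f (p.1, p.2.1)) P := by
  rw [← prodMkRight_densityKernel hf]
  exact hasCondDistrib_prodMkRight_of_condIndepFun hA hX hS hindep hd

lemma map_prodMk_eq_map_withDensity (hA : Measurable A) (hS : Measurable S) (hf : Measurable f)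
    (hd : HasCondDistrib A S (densityKernel μ f) P) :
    P.map (fun ω => (A ω, S ω))
      = ((μ.prod P).withDensity fun x => ENNReal.ofReal (f (x.1, S x.2))).map
          fun x => (x.1, S x.2) := by
  refine Measure.ext_of_lintegral _ fun φ hφ => ?_
  calc ∫⁻ y, φ y ∂P.map (fun ω => (A ω, S ω))
      = ∫⁻ y, φ y.swap ∂P.map (fun ω => (S ω, A ω)) := by
        rw [lintegral_map hφ (by fun_prop), lintegral_map (by fun_prop) (by fun_prop)]
        rfl
    _ = ∫⁻ ω, ∫⁻ a, φ (a, S ω) ∂densityKernel μ f (S ω) ∂P := by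
        have hφ_swap : Measurable fun y : 𝓢 × 𝓐 => φ y.swap := by fun_prop
        rw [hd.map_eq, Measure.lintegral_compProd hφ_swap,
          lintegral_map hφ_swap.lintegral_kernel_prod_right' hS]
        rfl
    _ = ∫⁻ ω, ∫⁻ a, ENNReal.ofReal (f (a, S ω)) * φ (a, S ω) ∂μ ∂P := by
        refine lintegral_congr fun ω => ?_
        rw [densityKernel_apply hf]
        exact lintegral_withDensity_eq_lintegral_mul _ (by fun_prop) (by fun_prop)
    _ = ∫⁻ x, ENNReal.ofReal (f (x.1, S x.2)) * φ (x.1, S x.2) ∂μ.prod P := by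
        rw [lintegral_prod_symm _ (by fun_prop)]
    _ = ∫⁻ y, φ y ∂((μ.prod P).withDensity fun x => ENNReal.ofReal (f (x.1, S x.2))).map
          fun x => (x.1, S x.2) := by
        rw [lintegral_map hφ (by fun_prop)]
        exact (lintegral_withDensity_eq_lintegral_mul _ (by fun_prop) (by fun_prop)).symm

lemma integrable_prodMk_iff_integrable_density_mul (hA : Measurable A) (hS : Measurable S)
    (hf : Measurable f) (hf_nonneg : ∀ x, 0 ≤ f x)
    (hd : HasCondDistrib A S (densityKernel μ f) P) {H : 𝓐 × 𝓢 → ℝ} (hH : Measurable H) :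
    Integrable (fun ω => H (A ω, S ω)) P
      ↔ Integrable (fun x => f (x.1, S x.2) * H (x.1, S x.2)) (μ.prod P) := by
  have hAS : Measurable fun ω => (A ω, S ω) := by fun_prop
  have hprod : Measurable fun x : 𝓐 × Ω => (x.1, S x.2) := by fun_prop
  have hAS_iff := integrable_map_measure (μ := P) hH.aestronglyMeasurable hAS.aemeasurable
  rw [map_prodMk_eq_map_withDensity hA hS hf hd,
    integrable_map_measure hH.aestronglyMeasurable hprod.aemeasurable,
    integrable_withDensity_iff_integrable_smul' (by fun_prop) (by simp)] at hAS_iff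
  simpa only [ENNReal.toReal_ofReal (hf_nonneg _), smul_eq_mul, Function.comp_def]
    using hAS_iff.symm

lemma integral_prodMk_eq_integral_density_mul (hA : Measurable A) (hS : Measurable S)
    (hf : Measurable f) (hf_nonneg : ∀ x, 0 ≤ f x)
    (hd : HasCondDistrib A S (densityKernel μ f) P) {H : 𝓐 × 𝓢 → ℝ} (hH : Measurable H) :
    ∫ ω, H (A ω, S ω) ∂P = ∫ x, f (x.1, S x.2) * H (x.1, S x.2) ∂μ.prod P := by
  have hAS : Measurable fun ω => (A ω, S ω) := by fun_prop
  have hprod : Measurable fun x : 𝓐 × Ω => (x.1, S x.2) := by fun_prop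
  rw [← integral_map hAS.aemeasurable hH.aestronglyMeasurable,
    map_prodMk_eq_map_withDensity hA hS hf hd,
    integral_map hprod.aemeasurable hH.aestronglyMeasurable,
    integral_withDensity_eq_integral_toReal_smul (by fun_prop) (by simp)]
  simp only [ENNReal.toReal_ofReal (hf_nonneg _), smul_eq_mul]

theorem integrable_and_integral_div_density_mul (hA : Measurable A) (hS : Measurable S)
    (hf : Measurable f) (hf_nonneg : ∀ x, 0 ≤ f x)
    (hd : HasCondDistrib A S (densityKernel μ f) P) {π : 𝓐 → ℝ} (hπ : Measurable π)
    (hf_pos : ∀ᵐ x ∂μ.prod P, π x.1 ≠ 0 → 0 < f (x.1, S x.2))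
    {G : 𝓐 × 𝓢 → ℝ} (hG : Measurable G)
    (hGπ : Integrable (fun x => G (x.1, S x.2) * π x.1) (μ.prod P)) :
    Integrable (fun ω => π (A ω) / f (A ω, S ω) * G (A ω, S ω)) P ∧
      ∫ ω, π (A ω) / f (A ω, S ω) * G (A ω, S ω) ∂P
        = ∫ ω, ∫ a, G (a, S ω) * π a ∂μ ∂P := by
  have hH : Measurable fun y => π y.1 / f y * G y := by fun_prop
  have hcancel : (fun x => f (x.1, S x.2) * (π x.1 / f (x.1, S x.2) * G (x.1, S x.2)))
      =ᵐ[μ.prod P] fun x => G (x.1, S x.2) * π x.1 := by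
    filter_upwards [hf_pos] with x hx
    by_cases hπx : π x.1 = 0
    · simp [hπx]
    · have := (hx hπx).ne'
      field_simp
  constructor
  · rw [integrable_prodMk_iff_integrable_density_mul hA hS hf hf_nonneg hd hH]
    exact hGπ.congr hcancel.symm
  · rw [integral_prodMk_eq_integral_density_mul hA hS hf hf_nonneg hd hH,
      integral_congr_ae hcancel, integral_prod_symm _ hGπ]

end DensityKernel

theorem integral_mul_eq_zero_of_condExp_ae_eq_zero {Ω : Type*} {m mΩ : MeasurableSpace Ω}
    {P : Measure Ω} (hm : m ≤ mΩ) [SigmaFinite (P.trim hm)] {k D : Ω → ℝ}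
    (hk : StronglyMeasurable[m] k) (hkD : Integrable (k * D) P) (hD : Integrable D P)
    (hcond : P[D | m] =ᵐ[P] 0) :
    ∫ ω, k ω * D ω ∂P = 0 := by
  have hpull : P[k * D | m] =ᵐ[P] 0 := by
    filter_upwards [condExp_mul_of_stronglyMeasurable_left hk hkD hD, hcond] with ω hω hω₀
    rw [hω, Pi.mul_apply, hω₀, Pi.zero_apply, mul_zero]
  calc ∫ ω, k ω * D ω ∂P = ∫ ω, (P[k * D | m]) ω ∂P := (integral_condExp hm).symm
    _ = 0 := integral_eq_zero_of_ae hpull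

theorem icc_lemma9_reg_bridge_general
    {Ω 𝓐 𝓢 𝓦 𝓔 : Type*}
    [MeasurableSpace Ω] [StandardBorelSpace Ω] [Nonempty Ω]
    [MeasurableSpace 𝓐] [StandardBorelSpace 𝓐] [MeasurableSpace 𝓢]
    [MeasurableSpace 𝓦] [StandardBorelSpace 𝓦] [MeasurableSpace 𝓔] [StandardBorelSpace 𝓔]
    {P : Measure Ω} [IsFiniteMeasure P] {μA : Measure 𝓐} [SFinite μA]
    {A : Ω → 𝓐} {S : Ω → 𝓢} {W : Ω → 𝓦} {ε : Ω → 𝓔}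
    (hA : Measurable A) (hS : Measurable S) (hW : Measurable W) (hε : Measurable ε)
    {g : 𝓐 × 𝓢 × 𝓔 → ℝ} {h₀ : 𝓐 × 𝓢 × 𝓦 → ℝ} {π : 𝓐 → ℝ}
    (hg : Measurable g) (hh₀ : Measurable h₀) (hπ : Measurable π)
    (hWindep : W ⟂ᵢ[S, hS; P] A) (hεindep : ε ⟂ᵢ[S, hS; P] A)
    {f : 𝓐 × 𝓢 → ℝ} (hf : Measurable f) (hf_nonneg : ∀ x, 0 ≤ f x)
    (hf_density : ∀ φ : 𝓐 × 𝓢 → ℝ, Measurable φ → (∃ C, ∀ x, |φ x| ≤ C) →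
      ∫ ω, φ (A ω, S ω) ∂P = ∫ ω, ∫ a, φ (a, S ω) * f (a, S ω) ∂μA ∂P)
    (hf_pos : ∀ᵐ x ∂μA.prod P, π x.1 ≠ 0 → 0 < f (x.1, S x.2))
    (hbridge : P[(fun ω => g (A ω, S ω, ε ω) - h₀ (A ω, S ω, W ω)) |
      MeasurableSpace.comap (fun ω => (A ω, S ω)) inferInstance] =ᵐ[P] 0)
    (hresidual : Integrable (fun ω => g (A ω, S ω, ε ω) - h₀ (A ω, S ω, W ω)) P)
    (hh₀π : Integrable (fun x : 𝓐 × Ω => h₀ (x.1, S x.2, W x.2) * π x.1) (μA.prod P))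
    (hgπ : Integrable (fun x : 𝓐 × Ω => g (x.1, S x.2, ε x.2) * π x.1) (μA.prod P)) :
    ∫ ω, ∫ a, h₀ (a, S ω, W ω) * π a ∂μA ∂P = ∫ ω, ∫ a, g (a, S ω, ε ω) * π a ∂μA ∂P := by
  have hd := hasCondDistrib_densityKernel_of_forall_integral_eq hA hS hf hf_nonneg hf_density
  have hdW := hasCondDistrib_densityKernel_prodMk_of_condIndepFun hA hW hS hf hWindep hd
  have hdε := hasCondDistrib_densityKernel_prodMk_of_condIndepFun hA hε hS hf hεindep hd
  obtain ⟨hintW, hW_eq⟩ := integrable_and_integral_div_density_mul hA (hS.prodMk hW)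
    (by fun_prop) (fun _ => hf_nonneg _) hdW hπ hf_pos hh₀ hh₀π
  obtain ⟨hintε, hε_eq⟩ := integrable_and_integral_div_density_mul hA (hS.prodMk hε)
    (by fun_prop) (fun _ => hf_nonneg _) hdε hπ hf_pos hg hgπ
  have hweight : Measurable fun y : 𝓐 × 𝓢 => π y.1 / f y := by fun_prop
  have hweighted_residual : ∫ ω, π (A ω) / f (A ω, S ω) *
      (g (A ω, S ω, ε ω) - h₀ (A ω, S ω, W ω)) ∂P = 0 :=
    integral_mul_eq_zero_of_condExp_ae_eq_zero (hA.prodMk hS).comap_le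
      (hweight.comp (comap_measurable _)).stronglyMeasurable
      ((hintε.sub hintW).congr (.of_forall fun _ => (mul_sub _ _ _).symm)) hresidual hbridge
  simp only [mul_sub] at hweighted_residual
  rw [integral_sub hintε hintW, sub_eq_zero] at hweighted_residual
  rw [← hW_eq, ← hε_eq, hweighted_residual]

/-- **Lemma 9, regression part (ICC paper).** If `W ⫫ (A, Z) | U`,
`ε ⫫ A | (Ṽ, U)`, the common-support condition holds for a conditional density
`f` of `A` given `(Ṽ, U)`, and `h₀` satisfies the structural outcome-bridge
condition `E[Y − h₀(A,Ṽ,W) | A, Ṽ, U] = 0` a.s., then the regression identity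
`E[∫ h₀(a, Ṽ, W) π(a) dμ_A(a)] = J := E[∫ g(a, U, ε) π(a) dμ_A(a)]` holds. -/
theorem icc_lemma9_reg_bridge
    {Ω 𝓐 𝓤 𝓩 𝓦 𝓔 : Type*}
    [MeasurableSpace Ω] [StandardBorelSpace Ω] [Nonempty Ω]
    [MeasurableSpace 𝓐] [StandardBorelSpace 𝓐]
    [MeasurableSpace 𝓤] [StandardBorelSpace 𝓤]
    [MeasurableSpace 𝓩] [StandardBorelSpace 𝓩]
    [MeasurableSpace 𝓦] [StandardBorelSpace 𝓦]
    [MeasurableSpace 𝓔] [StandardBorelSpace 𝓔]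
    (P : Measure Ω) [IsProbabilityMeasure P]
    (μA : Measure 𝓐) [SigmaFinite μA]
    (A : Ω → 𝓐) (U : Ω → 𝓤) (Z : Ω → 𝓩) (W : Ω → 𝓦) (ε : Ω → 𝓔)
    (hA : Measurable A) (hU : Measurable U) (hZ : Measurable Z) (hW : Measurable W)
    (hε : Measurable ε)
    (g : 𝓐 × 𝓤 × 𝓔 → ℝ) (π : 𝓐 → ℝ) (hg : Measurable g) (hπ : Measurable π)
    (v : 𝓐 × 𝓩 → ℝ) (hv : Measurable v)
    -- (i) W ⫫ (A, Z) | U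
    (hWindep : CondIndepFun (MeasurableSpace.comap U inferInstance) hU.comap_le
      W (fun ω => (A ω, Z ω)) P)
    -- (ii) ε ⫫ A | (Ṽ, U), where Ṽ = v(A, Z)
    (hεAindep : CondIndepFun
      (MeasurableSpace.comap (fun ω => (v (A ω, Z ω), U ω)) inferInstance)
      (Measurable.comap_le (by fun_prop)) ε A P)
    -- (iii) common support: f is a conditional density of A given (Ṽ, U)
    -- w.r.t. μ_A, positive where π ≠ 0
    (f : 𝓐 × ℝ × 𝓤 → ℝ) (hf : Measurable f) (hf_nonneg : ∀ x, 0 ≤ f x)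
    (hf_density : ∀ φ : 𝓐 × ℝ × 𝓤 → ℝ, Measurable φ → (∃ C, ∀ x, |φ x| ≤ C) →
      ∫ ω, φ (A ω, v (A ω, Z ω), U ω) ∂P
        = ∫ ω, (∫ a, φ (a, v (A ω, Z ω), U ω) * f (a, v (A ω, Z ω), U ω) ∂μA) ∂P)
    (hf_pos : ∀ᵐ x ∂(μA.prod P), π x.1 ≠ 0 → 0 < f (x.1, v (A x.2, Z x.2), U x.2))
    -- (iv) structural outcome-bridge condition:
    -- E[Y − h₀(A, Ṽ, W) | A, Ṽ, U] = 0 a.s., with Y = g(A, U, ε)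
    (h₀ : 𝓐 × ℝ × 𝓦 → ℝ) (hh₀ : Measurable h₀)
    (hbridge : P[(fun ω => g (A ω, U ω, ε ω) - h₀ (A ω, v (A ω, Z ω), W ω)) |
        MeasurableSpace.comap (fun ω => (A ω, v (A ω, Z ω), U ω)) inferInstance]
      =ᵐ[P] 0)
    -- (v) integrability of all displayed integrands
    (hYInt : Integrable (fun ω => g (A ω, U ω, ε ω)) P)
    (hh₀Int : Integrable (fun ω => h₀ (A ω, v (A ω, Z ω), W ω)) P)
    (hREGInt : Integrable
      (fun x : 𝓐 × Ω => h₀ (x.1, v (A x.2, Z x.2), W x.2) * π x.1) (μA.prod P))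
    (hJInt : Integrable (fun x : 𝓐 × Ω => g (x.1, U x.2, ε x.2) * π x.1) (μA.prod P)) :
    ∫ ω, (∫ a, h₀ (a, v (A ω, Z ω), W ω) * π a ∂μA) ∂P
      = ∫ ω, (∫ a, g (a, U ω, ε ω) * π a ∂μA) ∂P := by
  have hWindep' := condIndepFun_weak_union measurable_fst hv hW (hA.prodMk hZ) hU hWindep
  exact icc_lemma9_reg_bridge_general hA ((hv.comp (hA.prodMk hZ)).prodMk hU) hW hε
    (g := fun x => g (x.1, x.2.1.2, x.2.2)) (h₀ := fun x => h₀ (x.1, x.2.1.1, x.2.2))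
    (by fun_prop) (by fun_prop) hπ hWindep' hεAindep hf hf_nonneg hf_density hf_pos hbridge
    (hYInt.sub hh₀Int) hREGInt hJInt
end
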